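/- Let k and q be natural numbers with q > k ≥ 1. Then C(k,q), defined as the infimum of all λ > 1 for which there exist k ORC strategies producing a q-fold λ-cover of ℝ_{≥1}, equals 2·(q^q/((q-k)^{q-k} · k^k))^{1/k} + 1. -/

import Mathlib

/-!
Write `μ = (λ - 1) / 2`. If all turning points of the `k` robots are the powers of some `α > 1`,
dealt out cyclically, then every point is covered `q` times as soon as `μ = α ^ q / (α ^ k - 1)`;
the best choice is `α ^ k = q / (q - k)`.

For the lower bound, measure the target set logarithmically. A round reaching `u` after earlier
rounds of total length `s` covers `[s / μ, u]`, of logarithmic length `log (u / s) + log μ`.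
If `ρ` is the optimal `μ` for `κ` robots, weighted AM-GM gives
`κ * (log z + log ρ) ≤ q * log (1 + z)`; with `z = u / s` the right-hand side is `q` times the
increase of `log s` during the round, which telescopes. Hence a `q`-fold cover with `μ < ρ` of the
interval `[1, N]`, which needs total logarithmic length `q * log N`, forces
`κ * log N ≤ k * (log N + O(1))`, that is `κ ≤ k`. Since the optimum is continuous in `κ`, a
value of `μ` below the optimum for `k` is also below the optimum for some `κ > k`, a contradiction.
-/

open Finset MeasureTheory Real

/-! ### The optimal ratio -/

/-- The optimal value of `μ = (λ - 1) / 2` for a `q`-fold cover by `k` robots. It is defined for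
real `k`, because the lower bound perturbs the number of robots. -/
noncomputable def optimalReturnRatio (q k : ℝ) : ℝ :=
  (q ^ q / ((q - k) ^ (q - k) * k ^ k)) ^ (1 / k)

lemma optimalReturnRatio_natCast {q k : ℕ} (hkq : k ≤ q) :
    optimalReturnRatio q k =
      ((q : ℝ) ^ q / (((q - k : ℕ) : ℝ) ^ (q - k) * (k : ℝ) ^ k)) ^ ((1 : ℝ) / k) := by
  simp only [optimalReturnRatio, ← Nat.cast_sub hkq, rpow_natCast]

section OptimalReturnRatio

variable {q k : ℝ}

lemma optimalReturnRatio_pos (hk : 0 < k) (hkq : k < q) : 0 < optimalReturnRatio q k := by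
  have := hk.trans hkq
  have := sub_pos.2 hkq
  unfold optimalReturnRatio
  positivity

lemma mul_log_optimalReturnRatio (hk : 0 < k) (hkq : k < q) :
    k * log (optimalReturnRatio q k) = q * log q - (q - k) * log (q - k) - k * log k := by
  have hq := hk.trans hkq
  have hqk := sub_pos.2 hkq
  rw [optimalReturnRatio, log_rpow (by positivity), log_div (by positivity) (by positivity),
    log_mul (by positivity) (by positivity), log_rpow hq, log_rpow hqk, log_rpow hk]
  field_simp
  ring

lemma continuousAt_optimalReturnRatio (hk : 0 < k) (hkq : k < q) :
    ContinuousAt (optimalReturnRatio q) k := by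
  have hq := hk.trans hkq
  have hqk := sub_pos.2 hkq
  have hsub : ContinuousAt (fun x => q - x) k := by fun_prop
  have hden : ContinuousAt (fun x => (q - x) ^ (q - x) * x ^ x) k :=
    (hsub.rpow hsub (.inl hqk.ne')).mul (continuousAt_id.rpow continuousAt_id (.inl hk.ne'))
  have hden₀ : (q - k) ^ (q - k) * k ^ k ≠ 0 := by positivity
  have hquot₀ : q ^ q / ((q - k) ^ (q - k) * k ^ k) ≠ 0 := by positivity
  exact (continuousAt_const.div hden hden₀).rpow
    (continuousAt_const.div continuousAt_id hk.ne') (.inl hquot₀)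

lemma mul_log_add_log_optimalReturnRatio_le {z : ℝ} (hk : 0 < k) (hkq : k < q) (hz : 0 < z) :
    k * (log z + log (optimalReturnRatio q k)) ≤ q * log (1 + z) := by
  have hq := hk.trans hkq
  have hqk := sub_pos.2 hkq
  -- AM-GM with weights `(q - k) / q` and `k / q`, sharp at `z = k / (q - k)`.
  have amgm : (q - k) / q * log (q / (q - k)) + k / q * log (z * q / k) ≤ log (1 + z) := by
    have hx : q / (q - k) ∈ Set.Ioi 0 := Set.mem_Ioi.2 (by positivity)
    have hy : z * q / k ∈ Set.Ioi 0 := Set.mem_Ioi.2 (by positivity)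
    have hweights : (q - k) / q + k / q = 1 := by field_simp; ring
    have h := strictConcaveOn_log_Ioi.concaveOn.2 hx hy (by positivity) (by positivity) hweights
    have hmean : (q - k) / q * (q / (q - k)) + k / q * (z * q / k) = 1 + z := by field_simp
    simpa only [smul_eq_mul, hmean] using h
  rw [log_div hq.ne' hqk.ne', log_div (by positivity) hk.ne', log_mul hz.ne' hq.ne'] at amgm
  calc k * (log z + log (optimalReturnRatio q k))
      = q * ((q - k) / q * (log q - log (q - k)) + k / q * (log z + log q - log k)) := by
        rw [mul_add, mul_log_optimalReturnRatio hk hkq]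
        field_simp
        ring
    _ ≤ q * log (1 + z) := by gcongr

lemma mul_max_log_sub_log_div_le {s u : ℝ} (hk : 0 < k) (hkq : k < q) (hs : 0 < s) (hu : 0 < u) :
    k * max (log u - log (s / optimalReturnRatio q k)) 0 ≤ q * (log (s + u) - log s) := by
  have hρ := optimalReturnRatio_pos hk hkq
  have hgrow : log (s + u) - log s = log (1 + u / s) := by
    rw [← log_div (by positivity) hs.ne', add_div, div_self hs.ne']
  have hlen : log u - log (s / optimalReturnRatio q k)
      = log (u / s) + log (optimalReturnRatio q k) := by
    rw [log_div hs.ne' hρ.ne', log_div hu.ne' hs.ne']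
    ring
  rw [hgrow, hlen, mul_max_of_nonneg _ _ hk.le, mul_zero]
  refine max_le (mul_log_add_log_optimalReturnRatio_le hk hkq (by positivity)) ?_
  exact mul_nonneg (hk.trans hkq).le (log_nonneg (le_add_of_nonneg_right (by positivity)))

lemma rpow_div_eq_optimalReturnRatio (hk : 0 < k) (hkq : k < q) :
    (q / (q - k)) ^ (q / k) / (q / (q - k) - 1) = optimalReturnRatio q k := by
  have hq := hk.trans hkq
  have hqk := sub_pos.2 hkq
  have hbase : q / (q - k) - 1 = k / (q - k) := by field_simp; ring
  rw [hbase]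
  refine log_injOn_pos (Set.mem_Ioi.2 (by positivity))
    (Set.mem_Ioi.2 (optimalReturnRatio_pos hk hkq)) (mul_left_cancel₀ hk.ne' ?_)
  rw [mul_log_optimalReturnRatio hk hkq, log_div (by positivity) (by positivity),
    log_rpow (by positivity), log_div hq.ne' hqk.ne', log_div hk.ne' hqk.ne']
  field_simp
  ring

end OptimalReturnRatio

/-! ### Covers and geometric strategies -/

/-- The rounds `(r, i)`, for a robot `r` and an index `i`, in which `x` is `λ`-covered by the
family of strategies `t`; the parameter is `μ = (λ - 1) / 2`, and rounds are numbered from `0`. -/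
def coveringRounds {ι : Type*} (t : ι → ℕ → ℝ) (μ x : ℝ) : Set (ι × ℕ) :=
  {p | x ≤ t p.1 p.2 ∧ ∑ j ∈ range p.2, t p.1 j ≤ μ * x}

/-- The family of strategies `t` produces a `q`-fold `λ`-cover of `[1, ∞)`, where
`μ = (λ - 1) / 2`. Counting with `Set.ncard` is faithful because only finitely many rounds cover
a given point, see `coveringRounds_finite`. -/
structure IsReturnCover {ι : Type*} (t : ι → ℕ → ℝ) (μ : ℝ) (q : ℕ) : Prop where
  one_le : ∀ r i, 1 ≤ t r i
  le_ncard : ∀ x : ℝ, 1 ≤ x → q ≤ (coveringRounds t μ x).ncard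

lemma coveringRounds_finite {ι : Type*} [Finite ι] {t : ι → ℕ → ℝ} (ht : ∀ r i, 1 ≤ t r i)
    (μ x : ℝ) : (coveringRounds t μ x).Finite := by
  refine (Set.finite_univ.prod (Set.finite_Iic ⌊μ * x⌋₊)).subset ?_
  rintro ⟨r, i⟩ ⟨-, hi⟩
  have hindex : (i : ℝ) ≤ ∑ j ∈ range i, t r j := by
    simpa using card_nsmul_le_sum (range i) (t r) 1 fun j _ => ht r j
  exact ⟨Set.mem_univ r, Nat.le_floor (hindex.trans hi)⟩

/-- The strategies turning at the powers of `α`, dealt out cyclically to `k` robots. -/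
def geometricStrategy (k : ℕ) (α : ℝ) (r : Fin k) (i : ℕ) : ℝ :=
  α ^ (i * k + r)

lemma sum_range_geometricStrategy_le {k : ℕ} {α : ℝ} (hk : k ≠ 0) (hα : 1 < α) (r : Fin k)
    (i : ℕ) :
    ∑ j ∈ range i, geometricStrategy k α r j ≤ geometricStrategy k α r i / (α ^ k - 1) := by
  have hαk : 1 < α ^ k := one_lt_pow₀ hα hk
  simp only [geometricStrategy, pow_add, mul_comm _ k, pow_mul]
  rw [← sum_mul, geom_sum_eq hαk.ne', div_mul_eq_mul_div]
  have : 0 < α ^ k - 1 := sub_pos.2 hαk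
  gcongr
  exact sub_le_self _ zero_le_one

lemma isReturnCover_geometricStrategy {k : ℕ} [NeZero k] {α : ℝ} (hα : 1 < α) (q : ℕ) :
    IsReturnCover (geometricStrategy k α) (α ^ q / (α ^ k - 1)) q := by
  have hone : ∀ r i, 1 ≤ geometricStrategy k α r i := fun r i => one_le_pow₀ hα.le
  refine ⟨hone, fun x hx => ?_⟩
  have hαk : 0 < α ^ k - 1 := sub_pos.2 (one_lt_pow₀ hα (NeZero.ne k))
  obtain ⟨n, hnx, hxn⟩ := exists_nat_pow_near hx hα
  let round : ℕ ≃ Fin k × ℕ := (Nat.divModEquiv k).trans (Equiv.prodComm ℕ (Fin k))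
  have hround (j : ℕ) : geometricStrategy k α (round j).1 (round j).2 = α ^ j :=
    congrArg (α ^ ·) (round.symm_apply_apply j)
  have hcovers : round '' Set.Ioc n (n + q) ⊆
      coveringRounds (geometricStrategy k α) (α ^ q / (α ^ k - 1)) x := by
    rintro _ ⟨j, ⟨hnj, hjq⟩, rfl⟩
    refine ⟨?_, (sum_range_geometricStrategy_le (NeZero.ne k) hα _ _).trans ?_⟩
    · rw [hround]
      exact hxn.le.trans (pow_le_pow_right₀ hα.le hnj)
    · rw [hround, div_mul_eq_mul_div]
      gcongr
      calc α ^ j ≤ α ^ (n + q) := pow_le_pow_right₀ hα.le hjq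
        _ = α ^ q * α ^ n := by rw [add_comm, pow_add]
        _ ≤ α ^ q * x := by gcongr
  calc q = (round '' Set.Ioc n (n + q)).ncard := by
        rw [Set.ncard_image_of_injective _ round.injective, ← coe_Ioc, Set.ncard_coe_finset,
          Nat.card_Ioc, Nat.add_sub_cancel_left]
    _ ≤ _ := Set.ncard_le_ncard hcovers (coveringRounds_finite hone _ x)

theorem exists_isReturnCover_optimalReturnRatio {k q : ℕ} (hk : 0 < k) (hkq : k < q) :
    ∃ t : Fin k → ℕ → ℝ, IsReturnCover t (optimalReturnRatio q k) q := by
  have : NeZero k := ⟨hk.ne'⟩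
  have hk₀ : (0 : ℝ) < k := Nat.cast_pos.2 hk
  have hkq' : (k : ℝ) < q := Nat.cast_lt.2 hkq
  have hqk := sub_pos.2 hkq'
  have hbase : 1 < (q : ℝ) / (q - k) := (one_lt_div hqk).2 (sub_lt_self _ hk₀)
  set α : ℝ := ((q : ℝ) / (q - k)) ^ (1 / k : ℝ) with hα
  have hαpow (n : ℕ) : α ^ n = ((q : ℝ) / (q - k)) ^ (n / k : ℝ) := by
    rw [hα, ← rpow_mul_natCast (zero_le_one.trans hbase.le), one_div_mul_eq_div]
  have hratio : α ^ q / (α ^ k - 1) = optimalReturnRatio q k := by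
    rw [hαpow, hαpow, div_self hk₀.ne', rpow_one, rpow_div_eq_optimalReturnRatio hk₀ hkq']
  exact ⟨_, hratio ▸ isReturnCover_geometricStrategy (one_lt_rpow hbase (by positivity)) q⟩

/-! ### Measure of multiple covers -/

lemma mul_measure_le_sum_measure_of_le_ncard {α ι : Type*} [MeasurableSpace α] (ν : Measure α)
    {s : Finset ι} {A : ι → Set α} (hA : ∀ i ∈ s, MeasurableSet (A i)) {T : Set α} {q : ℕ}
    (hT : ∀ x ∈ T, q ≤ {i | i ∈ s ∧ x ∈ A i}.ncard) :
    q * ν T ≤ ∑ i ∈ s, ν (A i) := by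
  classical
  let f : α → ENNReal := fun x => ∑ i ∈ s, (A i).indicator 1 x
  have hcount (x : α) : ({i | i ∈ s ∧ x ∈ A i}.ncard : ENNReal) = f x := by
    rw [← coe_filter, Set.ncard_coe_finset, card_filter]
    simp [f, Set.indicator_apply]
  have hf : Measurable f := measurable_fun_sum s fun i hi => measurable_one.indicator (hA i hi)
  calc q * ν T ≤ q * ν {x | (q : ENNReal) ≤ f x} := by
        gcongr
        intro x hx
        simpa only [Set.mem_ofPred_eq, ← hcount, Nat.cast_le] using hT x hx
    _ ≤ ∫⁻ x, f x ∂ν := mul_meas_ge_le_lintegral hf _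
    _ = ∑ i ∈ s, ν (A i) := by
        rw [lintegral_finsetSum' s fun i hi => (measurable_one.indicator (hA i hi)).aemeasurable]
        exact sum_congr rfl fun i hi => lintegral_indicator_one (hA i hi)

lemma mul_sub_le_sum_max_of_le_ncard {ι : Type*} {s : Finset ι} {l u : ι → ℝ} {a b : ℝ} {q : ℕ}
    (h : ∀ x ∈ Set.Icc a b, q ≤ {i | i ∈ s ∧ x ∈ Set.Icc (l i) (u i)}.ncard) :
    q * (b - a) ≤ ∑ i ∈ s, max (u i - l i) 0 := by
  have hvol := mul_measure_le_sum_measure_of_le_ncard volume (fun i _ => measurableSet_Icc) h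
  simp only [Real.volume_Icc] at hvol
  have hnonneg : ∀ i ∈ s, 0 ≤ max (u i - l i) 0 := fun i _ => le_max_right _ _
  rw [← ENNReal.ofReal_le_ofReal_iff (sum_nonneg hnonneg), ENNReal.ofReal_sum_of_nonneg hnonneg,
    ENNReal.ofReal_mul (Nat.cast_nonneg q)]
  simpa [ENNReal.ofReal_max] using hvol

/-! ### The truncated distance of a single robot -/

/-- The distance covered (one way) before round `i` by a robot with strategy `t` whose turning
points are capped at `N`, increased by a head start `c`. The cap bounds the overshoot in the round
leaving `[1, N]`, and a head start `c > 0` keeps the logarithm at the initial round finite. -/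
def truncatedDistance (c N : ℝ) (t : ℕ → ℝ) (i : ℕ) : ℝ :=
  c + ∑ j ∈ range i, min (t j) N

section TruncatedDistance

variable {c N : ℝ} {t : ℕ → ℝ}

lemma truncatedDistance_zero : truncatedDistance c N t 0 = c := by
  simp [truncatedDistance]

lemma truncatedDistance_succ (i : ℕ) :
    truncatedDistance c N t (i + 1) = truncatedDistance c N t i + min (t i) N := by
  rw [truncatedDistance, sum_range_succ, ← add_assoc, truncatedDistance]

lemma monotone_truncatedDistance (ht : ∀ i, 0 ≤ t i) (hN : 0 ≤ N) :
    Monotone (truncatedDistance c N t) :=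
  monotone_nat_of_le_succ fun i =>
    (le_add_of_nonneg_right (le_min (ht i) hN)).trans_eq (truncatedDistance_succ i).symm

lemma truncatedDistance_pos (ht : ∀ i, 0 ≤ t i) (hN : 0 ≤ N) (hc : 0 < c) (i : ℕ) :
    0 < truncatedDistance c N t i :=
  add_pos_of_pos_of_nonneg hc (sum_nonneg fun j _ => le_min (ht j) hN)

lemma truncatedDistance_le_mul {μ x : ℝ} {i : ℕ} (hc : 0 ≤ c) (hx : 1 ≤ x)
    (hi : ∑ j ∈ range i, t j ≤ μ * x) : truncatedDistance c N t i ≤ (μ + c) * x :=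
  calc truncatedDistance c N t i ≤ c + ∑ j ∈ range i, t j :=
        add_le_add_right (sum_le_sum fun j _ => min_le_left (t j) N) c
    _ ≤ c * x + μ * x := add_le_add (le_mul_of_one_le_right hc hx) hi
    _ = (μ + c) * x := by ring

lemma exists_lt_truncatedDistance_le (ht : ∀ i, 1 ≤ t i) (hN : 1 ≤ N) {a : ℝ} (hca : c ≤ a) :
    ∃ m, a < truncatedDistance c N t m ∧ truncatedDistance c N t m ≤ a + N := by
  classical
  have hexceeds : ∃ m, a < truncatedDistance c N t m := by
    obtain ⟨m, hm⟩ := exists_nat_gt (a - c)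
    have hindex : (m : ℝ) ≤ ∑ j ∈ range m, min (t j) N := by
      simpa using card_nsmul_le_sum (range m) (fun j => min (t j) N) 1 fun j _ => le_min (ht j) hN
    exact ⟨m, sub_lt_iff_lt_add'.1 (hm.trans_le hindex)⟩
  refine ⟨Nat.find hexceeds, Nat.find_spec hexceeds, ?_⟩
  cases hm : Nat.find hexceeds with
  | zero => exact truncatedDistance_zero.trans_le (hca.trans (by linarith))
  | succ m =>
    have hprev : truncatedDistance c N t m ≤ a :=
      not_lt.1 (Nat.find_min hexceeds (hm ▸ Nat.lt_succ_self m))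
    exact (truncatedDistance_succ m).trans_le (add_le_add hprev (min_le_right _ _))

lemma mul_sum_max_log_truncatedDistance_le {κ q : ℝ} (hκ : 0 < κ) (hκq : κ < q)
    (ht : ∀ i, 0 < t i) (hN : 0 < N) (hc : 0 < c) (m : ℕ) :
    κ * ∑ i ∈ range m,
        max (log (min (t i) N) - log (truncatedDistance c N t i / optimalReturnRatio q κ)) 0 ≤
      q * (log (truncatedDistance c N t m) - log c) := by
  calc _ ≤ ∑ i ∈ range m,
        q * (log (truncatedDistance c N t (i + 1)) - log (truncatedDistance c N t i)) := by
        rw [mul_sum]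
        refine sum_le_sum fun i _ => ?_
        rw [truncatedDistance_succ]
        exact mul_max_log_sub_log_div_le hκ hκq
          (truncatedDistance_pos (fun j => (ht j).le) hN.le hc i) (lt_min (ht i) hN)
    _ = q * (log (truncatedDistance c N t m) - log c) := by
        rw [← mul_sum, sum_range_sub fun i => log (truncatedDistance c N t i),
          truncatedDistance_zero]

end TruncatedDistance

/-! ### The lower bound -/

namespace IsReturnCover

variable {ι : Type*} [Fintype ι] {t : ι → ℕ → ℝ} {q : ℕ}

lemma mul_log_le_sum {μ c N : ℝ} (hcov : IsReturnCover t μ q) (hN : 1 ≤ N) (hc : 0 < c)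
    (hμc : 0 < μ + c) {m : ι → ℕ} (hm : ∀ r, (μ + c) * N < truncatedDistance c N (t r) (m r)) :
    q * log N ≤ ∑ r, ∑ i ∈ range (m r),
      max (log (min (t r i) N) - log (truncatedDistance c N (t r) i / (μ + c))) 0 := by
  have ht (r : ι) (i : ℕ) : 0 < t r i := zero_lt_one.trans_le (hcov.one_le r i)
  have hN₀ : 0 < N := zero_lt_one.trans_le hN
  let s : Finset (ι × ℕ) :=
    (univ.sigma fun r => range (m r)).map (Equiv.sigmaEquivProd ι ℕ).toEmbedding
  have hs (r : ι) (i : ℕ) : (r, i) ∈ s ↔ i < m r := by simp [s]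
  have hsum : ∀ f : ι → ℕ → ℝ, ∑ p ∈ s, f p.1 p.2 = ∑ r, ∑ i ∈ range (m r), f r i := fun f => by
    simp [s, sum_sigma]
  rw [← hsum fun r i =>
    max (log (min (t r i) N) - log (truncatedDistance c N (t r) i / (μ + c))) 0,
    ← sub_zero (log N)]
  refine mul_sub_le_sum_max_of_le_ncard fun y ⟨hy₀, hyN⟩ => ?_
  have hexpN : exp y ≤ N := (le_log_iff_exp_le hN₀).1 hyN
  refine (hcov.le_ncard (exp y) (one_le_exp hy₀)).trans
    (Set.ncard_le_ncard ?_ (s.finite_toSet.subset fun p hp => hp.1))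
  rintro ⟨r, i⟩ ⟨hreach, hprefix⟩
  have hdist : truncatedDistance c N (t r) i ≤ (μ + c) * exp y :=
    truncatedDistance_le_mul hc.le (one_le_exp hy₀) hprefix
  have hpos := truncatedDistance_pos (fun j => (ht r j).le) hN₀.le hc i
  refine ⟨(hs r i).2 ?_, ?_, ?_⟩
  · have hmono : Monotone (truncatedDistance c N (t r)) :=
      monotone_truncatedDistance (fun j => (ht r j).le) hN₀.le
    refine hmono.reflect_lt ?_
    calc truncatedDistance c N (t r) i ≤ (μ + c) * exp y := hdist
      _ ≤ (μ + c) * N := by gcongr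
      _ < truncatedDistance c N (t r) (m r) := hm r
  · rw [log_le_iff_le_exp (by positivity)]
    exact (div_le_iff₀' hμc).2 hdist
  · exact (le_log_iff_exp_le (lt_min (ht r i) hN₀)).2 (le_min hreach hexpN)

lemma mul_log_le {μ c κ N : ℝ} (hcov : IsReturnCover t μ q) (hμ : 0 ≤ μ) (hκ : 0 < κ)
    (hκq : κ < q) (hc : 0 < c) (hμc : μ + c = optimalReturnRatio q κ) (hN : 1 ≤ N) :
    κ * log N ≤ Fintype.card ι * (log N + log ((μ + c + 1) / c)) := by
  have ht (r : ι) (i : ℕ) : 0 < t r i := zero_lt_one.trans_le (hcov.one_le r i)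
  have hq : (0 : ℝ) < q := hκ.trans hκq
  have hN₀ : 0 < N := zero_lt_one.trans_le hN
  have hρ : 0 < μ + c := by positivity
  have hcρ : c ≤ (μ + c) * N :=
    (le_add_of_nonneg_left hμ).trans (le_mul_of_one_le_right hρ.le hN)
  choose m hm hmN using fun r =>
    exists_lt_truncatedDistance_le (c := c) (hcov.one_le r) hN hcρ
  have hrobot (r : ι) : log (truncatedDistance c N (t r) (m r)) - log c ≤
      log N + log ((μ + c + 1) / c) := by
    have hpos := truncatedDistance_pos (fun j => (ht r j).le) hN₀.le hc (m r)
    rw [← log_div hpos.ne' hc.ne', ← log_mul hN₀.ne' (by positivity)]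
    refine log_le_log (by positivity) ?_
    rw [← mul_div_assoc]
    gcongr
    linarith [hmN r]
  refine le_of_mul_le_mul_left ?_ hq
  calc q * (κ * log N) = κ * (q * log N) := by ring
    _ ≤ κ * ∑ r, ∑ i ∈ range (m r),
        max (log (min (t r i) N) - log (truncatedDistance c N (t r) i / (μ + c))) 0 := by
      gcongr
      exact hcov.mul_log_le_sum hN hc hρ hm
    _ ≤ ∑ r, q * (log (truncatedDistance c N (t r) (m r)) - log c) := by
      rw [mul_sum, hμc]
      exact sum_le_sum fun r _ =>
        mul_sum_max_log_truncatedDistance_le hκ hκq (ht r) hN₀ hc (m r)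
    _ ≤ ∑ _r : ι, q * (log N + log ((μ + c + 1) / c)) := by
      gcongr with r
      exact hrobot r
    _ = q * (Fintype.card ι * (log N + log ((μ + c + 1) / c))) := by
      rw [sum_const, card_univ, nsmul_eq_mul]
      ring

theorem le_card {μ κ : ℝ} (hcov : IsReturnCover t μ q) (hμ : 0 ≤ μ) (hκ : 0 < κ) (hκq : κ < q)
    (hlt : μ < optimalReturnRatio q κ) : κ ≤ Fintype.card ι := by
  by_contra! hcard
  set c := optimalReturnRatio q κ - μ
  set K := log ((μ + c + 1) / c)
  obtain ⟨L, hL⟩ := exists_gt (max 0 (Fintype.card ι * K / (κ - Fintype.card ι)))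
  obtain ⟨hL₀, hLK⟩ := max_lt_iff.1 hL
  rw [div_lt_iff₀ (sub_pos.2 hcard)] at hLK
  have hbound := hcov.mul_log_le hμ hκ hκq (sub_pos.2 hlt) (add_sub_cancel _ _)
    (one_le_exp hL₀.le)
  rw [log_exp] at hbound
  linarith

theorem optimalReturnRatio_le [Nonempty ι] {μ : ℝ} (hcov : IsReturnCover t μ q) (hμ : 0 ≤ μ)
    (hq : Fintype.card ι < q) : optimalReturnRatio q (Fintype.card ι) ≤ μ := by
  have hk : (0 : ℝ) < Fintype.card ι := Nat.cast_pos.2 Fintype.card_pos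
  have hkq : (Fintype.card ι : ℝ) < q := Nat.cast_lt.2 hq
  by_contra! hlt
  have hnear := ((continuousAt_optimalReturnRatio hk hkq).eventually_const_lt hlt).and
    (eventually_lt_nhds hkq)
  obtain ⟨κ, hkκ, hμκ, hκq⟩ := hnear.exists_gt
  exact (hcov.le_card hμ (hk.trans hkκ) hκq hμκ).not_gt hkκ

end IsReturnCover

/-- The optimal competitive ratio `C(k,q)` for `q`-fold covering of `[1,∞)` with
`k` robots in the one-ray-cover-with-returns setting equals
`2 (q^q/((q-k)^(q-k) k^k))^(1/k) + 1`. -/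
theorem orc_cover_competitive_ratio
    (k q : ℕ) (hk : 1 ≤ k) (hkq : k < q) :
    sInf {lam : ℝ | 1 < lam ∧
        ∃ t : Fin k → ℕ → ℝ,
          (∀ r i, 1 ≤ t r i) ∧
          ∀ x : ℝ, 1 ≤ x →
            q ≤ {p : Fin k × ℕ | x ≤ t p.1 p.2 ∧
                  (∑ j ∈ Finset.range p.2, t p.1 j) ≤ ((lam - 1) / 2) * x}.ncard}
      = 2 * ((q : ℝ) ^ q / (((q - k : ℕ) : ℝ) ^ (q - k) * (k : ℝ) ^ k)) ^ ((1 : ℝ) / k)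
          + 1 := by
  rw [← optimalReturnRatio_natCast hkq.le]
  refine IsLeast.csInf_eq ⟨⟨?_, ?_⟩, ?_⟩
  · have := optimalReturnRatio_pos (Nat.cast_pos.2 hk) (Nat.cast_lt (α := ℝ).2 hkq)
    linarith
  · obtain ⟨t, ht⟩ := exists_isReturnCover_optimalReturnRatio hk hkq
    rw [add_sub_cancel_right, mul_div_cancel_left₀ _ two_ne_zero]
    exact ⟨t, ht.one_le, ht.le_ncard⟩
  · rintro lam ⟨hlam, t, ht, hcov⟩
    have : NeZero k := ⟨Nat.ne_of_gt hk⟩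
    have hcover : IsReturnCover t ((lam - 1) / 2) q := ⟨ht, hcov⟩
    have hle := hcover.optimalReturnRatio_le (by linarith) (by simpa using hkq)
    rw [Fintype.card_fin] at hle
    linarith
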